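/- arXiv:2412.17318 — 8 statements merged into one kernel-verified Lean document; each statement's English description precedes it below -/
import Mathlib

section
/- Let V be a real reflexive Banach space, let V₁, …, V_N be closed subspaces of V, let F : V → ℝ be convex and Gâteaux differentiable with Gâteaux derivative F' : V → V*, and let 𝒩 be a closed subspace of V such that F(v + φ) = F(v) for all v ∈ V and φ ∈ 𝒩. Fix v ∈ V and suppose that for each j ∈ {1, …, N}, ŵ_j ∈ V_j minimizes w_j ↦ F(v + w_j) over V_j; set ŵ = Σ_{j=1}^N ŵ_j. Then for every w ∈ V, every φ ∈ 𝒩, and every choice of w_j ∈ V_j (j = 1, …, N) with Σ_{j=1}^N w_j = w + φ, one has ⟨F'(v), ŵ⟩ + Σ_{j=1}^N d_F(ŵ_j; v) ≤ ⟨F'(v), w⟩ + Σ_{j=1}^N d_F(w_j; v). In particular (taking w = ŵ), Σ_{j=1}^N d_F(ŵ_j; v) ≤ Σ_{j=1}^N d_F(w_j; v) for every φ ∈ 𝒩 and every decomposition Σ_{j=1}^N w_j = ŵ + φ with w_j ∈ V_j. -/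
/-- `f` is the Gâteaux derivative of `F` at `v`. -/
def HasGateauxDerivAt {V : Type*} [NormedAddCommGroup V] [NormedSpace ℝ V]
    (F : V → ℝ) (f : V →L[ℝ] ℝ) (v : V) : Prop :=
  ∀ w : V, Filter.Tendsto (fun t : ℝ => (F (v + t • w) - F v) / t)
    (nhdsWithin (0 : ℝ) {(0 : ℝ)}ᶜ) (nhds (f w))

/-!
The functional `F'(v)` vanishes on `𝒩`, so the term `⟨F'(v), w⟩` splits as `∑ j, ⟨F'(v), w_j⟩` and
cancels the linear parts of the Bregman distances. What remains is `∑ j, (F (v + w_j) - F v)`, whose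
summands are minimized independently of each other by the local corrections.
-/

open scoped Topology

/-- The Bregman distance `d_F(w; v)` of `F`: the error of the first-order expansion of `F` at `v` in
the direction `w`. The derivative of `F` at `v` is passed as the argument `f`. -/
def bregmanDist {V : Type*} [Add V] (F f : V → ℝ) (v w : V) : ℝ :=
  F (v + w) - F v - f w

section BregmanDist

variable {V 𝓕 ι : Type*} [AddCommMonoid V] [FunLike 𝓕 V ℝ] [AddMonoidHomClass 𝓕 V ℝ] [Fintype ι]

theorem map_sum_add_sum_bregmanDist (F : V → ℝ) (f : 𝓕) (v : V) (w : ι → V) :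
    f (∑ j, w j) + ∑ j, bregmanDist F f v (w j) = ∑ j, (F (v + w j) - F v) := by
  rw [map_sum, ← Finset.sum_add_distrib]
  simp only [bregmanDist, add_sub_cancel]

theorem map_sum_add_sum_bregmanDist_le_of_isMinOn {F : V → ℝ} (f : 𝓕) {v : V} {K : ι → Set V}
    {wh w : ι → V} (hmin : ∀ j, IsMinOn (fun x => F (v + x)) (K j) (wh j))
    (hw : ∀ j, w j ∈ K j) :
    f (∑ j, wh j) + ∑ j, bregmanDist F f v (wh j) ≤
      f (∑ j, w j) + ∑ j, bregmanDist F f v (w j) := by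
  simp only [map_sum_add_sum_bregmanDist]
  gcongr with j
  exact isMinOn_iff.mp (hmin j) (w j) (hw j)

end BregmanDist

section Gateaux

variable {V : Type*} [NormedAddCommGroup V] [NormedSpace ℝ V] {F : V → ℝ} {f : V →L[ℝ] ℝ} {v : V}

theorem HasGateauxDerivAt.apply_eq_zero_of_eventually_eq {φ : V} (hf : HasGateauxDerivAt F f v)
    (hF : ∀ᶠ t : ℝ in 𝓝[≠] 0, F (v + t • φ) = F v) : f φ = 0 := by
  refine tendsto_nhds_unique (hf φ) (tendsto_const_nhds.congr' ?_)
  filter_upwards [hF] with t ht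
  rw [ht, sub_self, zero_div]

theorem HasGateauxDerivAt.apply_eq_zero_of_mem {𝒩 : Submodule ℝ V} (hf : HasGateauxDerivAt F f v)
    (hF : ∀ φ ∈ 𝒩, F (v + φ) = F v) {φ : V} (hφ : φ ∈ 𝒩) : f φ = 0 :=
  hf.apply_eq_zero_of_eventually_eq (.of_forall fun t => hF _ (𝒩.smul_mem t hφ))

theorem stmt_2_general {ι : Type*} [Fintype ι] {𝒩 : Submodule ℝ V} {K : ι → Set V} {wh : ι → V}
    (hf : HasGateauxDerivAt F f v) (hinv : ∀ φ ∈ 𝒩, F (v + φ) = F v)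
    (hmin : ∀ j, IsMinOn (fun x => F (v + x)) (K j) (wh j)) :
    (∀ w φ : V, φ ∈ 𝒩 → ∀ wj : ι → V, (∀ j, wj j ∈ K j) → ∑ j, wj j = w + φ →
      f (∑ j, wh j) + ∑ j, bregmanDist F f v (wh j) ≤ f w + ∑ j, bregmanDist F f v (wj j)) ∧
    (∀ φ : V, φ ∈ 𝒩 → ∀ wj : ι → V, (∀ j, wj j ∈ K j) → ∑ j, wj j = ∑ j, wh j + φ →
      ∑ j, bregmanDist F f v (wh j) ≤ ∑ j, bregmanDist F f v (wj j)) := by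
  have hle : ∀ w φ : V, φ ∈ 𝒩 → ∀ wj : ι → V, (∀ j, wj j ∈ K j) → ∑ j, wj j = w + φ →
      f (∑ j, wh j) + ∑ j, bregmanDist F f v (wh j) ≤ f w + ∑ j, bregmanDist F f v (wj j) := by
    intro w φ hφ wj hwj hsum
    have hfw : f (∑ j, wj j) = f w := by
      rw [hsum, map_add, hf.apply_eq_zero_of_mem hinv hφ, add_zero]
    rw [← hfw]
    exact map_sum_add_sum_bregmanDist_le_of_isMinOn f hmin hwj
  exact ⟨hle, fun φ hφ wj hwj hsum => le_of_add_le_add_left (hle _ φ hφ wj hwj hsum)⟩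

end Gateaux

/-- generalized additive Schwarz lemma for semicoercive problems. -/
theorem stmt_2 {V : Type*} [NormedAddCommGroup V] [NormedSpace ℝ V] [CompleteSpace V]
    (hrefl : Function.Surjective (NormedSpace.inclusionInDoubleDual ℝ V))
    (N : ℕ) (Vj : Fin N → Submodule ℝ V) (hVjc : ∀ j, IsClosed ((Vj j : Set V)))
    (F : V → ℝ) (hconv : ConvexOn ℝ Set.univ F)
    (F' : V → V →L[ℝ] ℝ) (hF' : ∀ v : V, HasGateauxDerivAt F (F' v) v)
    (𝒩 : Submodule ℝ V) (h𝒩c : IsClosed ((𝒩 : Set V)))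
    (hinv : ∀ v : V, ∀ φ ∈ 𝒩, F (v + φ) = F v)
    (v : V) (wh : Fin N → V) (hwhmem : ∀ j, wh j ∈ Vj j)
    (hwhmin : ∀ j, ∀ x ∈ Vj j, F (v + wh j) ≤ F (v + x)) :
    (∀ (w φ : V), φ ∈ 𝒩 → ∀ wj : Fin N → V, (∀ j, wj j ∈ Vj j) →
      (∑ j, wj j) = w + φ →
      F' v (∑ j, wh j) + ∑ j, (F (v + wh j) - F v - F' v (wh j)) ≤
        F' v w + ∑ j, (F (v + wj j) - F v - F' v (wj j)))
    ∧
    (∀ φ : V, φ ∈ 𝒩 → ∀ wj : Fin N → V, (∀ j, wj j ∈ Vj j) →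
      (∑ j, wj j) = (∑ j, wh j) + φ →
      ∑ j, (F (v + wh j) - F v - F' v (wh j)) ≤
        ∑ j, (F (v + wj j) - F v - F' v (wj j))) :=
  stmt_2_general (hF' v) (hinv v) fun j => isMinOn_iff.mpr (hwhmin j)
end

section
/- Let V be a real reflexive Banach space, let V₁, …, V_N be closed subspaces of V, and let F : V → ℝ be convex and Gâteaux differentiable. Let τ > 0 satisfy the strengthened convexity condition, and let (u^n) be generated by the PSC iteration with exact local problems from an initial point u⁰ ∈ V. Then the energy sequence is decreasing: F(u^{n+1}) ≤ F(u^n) for all n ≥ 0. -/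
/-!
Strengthened convexity says that a PSC step lowers the energy by at least `τ` times the sum of the
decreases achieved by the individual local corrections. Each of these decreases is nonnegative
because the zero correction is admissible in every local problem.
-/

section

variable {𝕜 V ι : Type*} [Ring 𝕜] [PartialOrder 𝕜] [AddCommMonoid V] [Module 𝕜 V] [Fintype ι]

/-- The strengthened convexity condition with parameter `τ`, for an energy `F` and a finite family
of subspaces `W j`. It bounds the energy after a simultaneous correction by the energies after the
individual ones; the weight `1 - τ * Fintype.card ι` may be negative. -/
def StrengthenedConvexity (F : V → 𝕜) (W : ι → Submodule 𝕜 V) (τ : 𝕜) : Prop :=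
  ∀ (v : V) (z : ι → V), (∀ j, z j ∈ W j) →
    F (v + τ • ∑ j, z j) ≤ (1 - τ * Fintype.card ι) * F v + τ * ∑ j, F (v + z j)

/-- The sequence `u` is produced by the parallel subspace correction (PSC) method with step size `τ`
and exact local problems. The local minimizers `w n j` are part of the data since they need not be
unique, and `w n j` corresponds to the paper's `w_j^{n+1}`. -/
structure IsPSCIteration (F : V → 𝕜) (W : ι → Submodule 𝕜 V) (τ : 𝕜)
    (u : ℕ → V) (w : ℕ → ι → V) : Prop where
  mem : ∀ n j, w n j ∈ W j
  isMinOn : ∀ n j, IsMinOn (fun x ↦ F (u n + x)) (W j) (w n j)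
  succ_eq : ∀ n, u (n + 1) = u n + τ • ∑ j, w n j

variable {F : V → 𝕜} {W : ι → Submodule 𝕜 V} {τ : 𝕜}

theorem StrengthenedConvexity.le_sub_mul_sum_sub (hF : StrengthenedConvexity F W τ) (v : V)
    {z : ι → V} (hz : ∀ j, z j ∈ W j) :
    F (v + τ • ∑ j, z j) ≤ F v - τ * ∑ j, (F v - F (v + z j)) :=
  calc
    F (v + τ • ∑ j, z j) ≤ (1 - τ * Fintype.card ι) * F v + τ * ∑ j, F (v + z j) := hF v z hz
    _ = F v - τ * ∑ j, (F v - F (v + z j)) := by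
      rw [Finset.sum_sub_distrib, Finset.sum_const, Finset.card_univ, nsmul_eq_mul]
      noncomm_ring

theorem StrengthenedConvexity.le_of_forall_le [IsOrderedRing 𝕜]
    (hF : StrengthenedConvexity F W τ) (hτ : 0 ≤ τ) {v : V} {z : ι → V}
    (hz : ∀ j, z j ∈ W j) (hle : ∀ j, F (v + z j) ≤ F v) :
    F (v + τ • ∑ j, z j) ≤ F v :=
  (hF.le_sub_mul_sum_sub v hz).trans <| sub_le_self _ <|
    mul_nonneg hτ <| Finset.sum_nonneg fun j _ ↦ sub_nonneg.2 (hle j)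

theorem IsPSCIteration.add_correction_le {u : ℕ → V} {w : ℕ → ι → V}
    (h : IsPSCIteration F W τ u w) (n : ℕ) (j : ι) : F (u n + w n j) ≤ F (u n) := by
  simpa only [add_zero] using isMinOn_iff.1 (h.isMinOn n j) 0 (W j).zero_mem

theorem stmt_4_general [IsOrderedRing 𝕜] (hF : StrengthenedConvexity F W τ) (hτ : 0 ≤ τ)
    {u : ℕ → V} {w : ℕ → ι → V} (h : IsPSCIteration F W τ u w) : Antitone (F ∘ u) :=
  antitone_nat_of_succ_le fun n ↦ by
    simpa only [Function.comp_apply, h.succ_eq] using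
      hF.le_of_forall_le hτ (h.mem n) (h.add_correction_le n)

end

/-- the energy sequence produced by the PSC method (exact local problems)
is decreasing. -/
theorem stmt_4 {V : Type*} [NormedAddCommGroup V] [NormedSpace ℝ V] [CompleteSpace V]
    (hrefl : Function.Surjective (NormedSpace.inclusionInDoubleDual ℝ V))
    (N : ℕ) (Vj : Fin N → Submodule ℝ V) (hVjc : ∀ j, IsClosed ((Vj j : Set V)))
    (F : V → ℝ) (hconv : ConvexOn ℝ Set.univ F)
    (F' : V → V →L[ℝ] ℝ) (hF' : ∀ v : V, HasGateauxDerivAt F (F' v) v)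
    (τ : ℝ) (hτ : 0 < τ)
    (hsc : ∀ (v : V) (z : Fin N → V), (∀ j, z j ∈ Vj j) →
      (1 - τ * (N : ℝ)) * F v + τ * ∑ j, F (v + z j) ≥ F (v + τ • ∑ j, z j))
    (u : ℕ → V) (w : ℕ → Fin N → V)
    (hwmem : ∀ n j, w n j ∈ Vj j)
    (hwmin : ∀ n j, ∀ x ∈ Vj j, F (u n + w n j) ≤ F (u n + x))
    (hupd : ∀ n : ℕ, u (n + 1) = u n + τ • ∑ j, w n j) :
    ∀ n : ℕ, F (u (n + 1)) ≤ F (u n) := by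
  have hF : StrengthenedConvexity F Vj τ := fun v z hz ↦ by
    simpa only [Fintype.card_fin] using hsc v z hz
  exact fun n ↦ stmt_4_general hF hτ.le ⟨hwmem, hwmin, hupd⟩ n.le_succ
end

section
/- Let V be a real Banach space, let V₁, …, V_N be closed subspaces with V = V₁ + ⋯ + V_N (every element of V is a finite sum of elements of the V_j), and let |·| be a continuous seminorm on V such that there exists C₀ > 0 with inf_{φ ∈ ker|·|} ‖v + φ‖ ≤ C₀|v| for all v ∈ V, and such that for each j there exists C_j > 0 with inf_{φ_j ∈ V_j ∩ ker|·|} ‖v_j + φ_j‖ ≤ C_j|v_j| for all v_j ∈ V_j. Then for every q ∈ [1, ∞) there exists a constant C > 0 such that for every w ∈ V and every δ > 0 there exist φ ∈ ker|·| and w_j ∈ V_j (j = 1, …, N) with Σ_{j=1}^N w_j = w + φ and (Σ_{j=1}^N ‖w_j‖^q)^{1/q} ≤ C|w| + δ. -/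
/-! By the open mapping theorem, applied to the sum map from the `ℓ¹`-product of the spaces `V_j`
onto `V`, every `v ∈ V` decomposes over the `V_j` with the `ℓ¹`-norm of the decomposition at most
`K * ‖v‖`. Given `w` and `δ`, apply this to `w + φ`, where `φ ∈ ker |·|` almost attains the
quotient norm of `w`. As the `ℓ¹`-norm dominates every `ℓ^q`-norm with `1 ≤ q`, a single
decomposition serves all `q` at once. -/

section PowerSums

variable {ι : Type*} {s : Finset ι} {f : ι → ℝ} {q : ℝ}

lemma sum_rpow_le_rpow_sum_of_nonneg (hf : ∀ i ∈ s, 0 ≤ f i) (hq : 1 ≤ q) :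
    ∑ i ∈ s, f i ^ q ≤ (∑ i ∈ s, f i) ^ q := by
  induction s using Finset.cons_induction with
  | empty => simp [Real.zero_rpow (zero_lt_one.trans_le hq).ne']
  | cons a s ha ih =>
    obtain ⟨hfa, hfs⟩ := (Finset.forall_mem_cons ha _).1 hf
    rw [Finset.sum_cons, Finset.sum_cons]
    calc f a ^ q + ∑ i ∈ s, f i ^ q ≤ f a ^ q + (∑ i ∈ s, f i) ^ q := by gcongr; exact ih hfs
      _ ≤ (f a + ∑ i ∈ s, f i) ^ q :=
        Real.add_rpow_le_rpow_add hfa (Finset.sum_nonneg hfs) hq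

lemma sum_rpow_rpow_one_div_le_sum_of_nonneg (hf : ∀ i ∈ s, 0 ≤ f i) (hq : 1 ≤ q) :
    (∑ i ∈ s, f i ^ q) ^ (1 / q) ≤ ∑ i ∈ s, f i := by
  rw [one_div, Real.rpow_inv_le_iff_of_pos
    (Finset.sum_nonneg fun i hi ↦ Real.rpow_nonneg (hf i hi) q) (Finset.sum_nonneg hf)
    (zero_lt_one.trans_le hq)]
  exact sum_rpow_le_rpow_sum_of_nonneg hf hq

end PowerSums

section StableDecomposition

variable {𝕜 V ι : Type*} [NontriviallyNormedField 𝕜] [NormedAddCommGroup V] [NormedSpace 𝕜 V]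
  [CompleteSpace V] [Fintype ι]

lemma exists_sum_apply_eq_and_sum_norm_le {E : ι → Type*} [∀ i, NormedAddCommGroup (E i)]
    [∀ i, NormedSpace 𝕜 (E i)] [∀ i, CompleteSpace (E i)] (T : ∀ i, E i →L[𝕜] V)
    (hT : ∀ v : V, ∃ x : ∀ i, E i, ∑ i, T i (x i) = v) :
    ∃ C > 0, ∀ v : V, ∃ x : ∀ i, E i, ∑ i, T i (x i) = v ∧ ∑ i, ‖x i‖ ≤ C * ‖v‖ := by
  let S : PiLp 1 E →L[𝕜] V := ∑ i, T i ∘L PiLp.proj 1 E i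
  have S_apply (x : PiLp 1 E) : S x = ∑ i, T i (x i) := by simp [S]
  have S_surjective : Function.Surjective S := fun v ↦
    let ⟨x, hx⟩ := hT v
    ⟨WithLp.toLp 1 x, by rw [S_apply, ← hx]⟩
  obtain ⟨C, hC, hS⟩ := S.exists_preimage_norm_le S_surjective
  refine ⟨C, hC, fun v ↦ ?_⟩
  obtain ⟨x, hxv, hx⟩ := hS v
  exact ⟨x.ofLp, (S_apply x).symm.trans hxv, (PiLp.norm_eq_of_L1 x).symm.trans_le hx⟩

lemma exists_sum_eq_and_sum_norm_le_of_isClosed {W : ι → Submodule 𝕜 V}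
    (hW : ∀ i, IsClosed (W i : Set V))
    (hsum : ∀ v : V, ∃ w : ι → V, (∀ i, w i ∈ W i) ∧ ∑ i, w i = v) :
    ∃ C > 0, ∀ v : V, ∃ w : ι → V,
      (∀ i, w i ∈ W i) ∧ ∑ i, w i = v ∧ ∑ i, ‖w i‖ ≤ C * ‖v‖ := by
  have (i : ι) : CompleteSpace (W i) := (hW i).completeSpace_coe
  have hT (v : V) : ∃ x : ∀ i, W i, ∑ i, (W i).subtypeL (x i) = v :=
    let ⟨w, hwW, hwv⟩ := hsum v
    ⟨fun i ↦ ⟨w i, hwW i⟩, hwv⟩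
  obtain ⟨C, hC, hdec⟩ := exists_sum_apply_eq_and_sum_norm_le (fun i ↦ (W i).subtypeL) hT
  refine ⟨C, hC, fun v ↦ ?_⟩
  obtain ⟨x, hxv, hx⟩ := hdec v
  exact ⟨fun i ↦ x i, fun i ↦ (x i).2, hxv, hx⟩

theorem stmt_5_general {W : ι → Submodule 𝕜 V} (hW : ∀ i, IsClosed (W i : Set V))
    (hsum : ∀ v : V, ∃ w : ι → V, (∀ i, w i ∈ W i) ∧ ∑ i, w i = v)
    (p : Seminorm 𝕜 V) {C₀ : ℝ} (hC₀ : 0 < C₀)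
    (hp : ∀ v : V, (⨅ φ : {x : V // p x = 0}, ‖v + (φ : V)‖) ≤ C₀ * p v) :
    ∃ C > 0, ∀ (v : V) (δ : ℝ), 0 < δ → ∃ (φ : V) (w : ι → V), p φ = 0 ∧ (∀ i, w i ∈ W i) ∧
      ∑ i, w i = v + φ ∧ ∀ q : ℝ, 1 ≤ q → (∑ i, ‖w i‖ ^ q) ^ (1 / q) ≤ C * p v + δ := by
  obtain ⟨K, hK, hdec⟩ := exists_sum_eq_and_sum_norm_le_of_isClosed hW hsum
  refine ⟨K * C₀, mul_pos hK hC₀, fun v δ hδ ↦ ?_⟩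
  have : Nonempty {x : V // p x = 0} := ⟨⟨0, map_zero p⟩⟩
  obtain ⟨⟨φ, hφ⟩, hvφ⟩ : ∃ φ : {x : V // p x = 0}, ‖v + (φ : V)‖ < C₀ * p v + δ / K :=
    exists_lt_of_ciInf_lt ((hp v).trans_lt (lt_add_of_pos_right _ (div_pos hδ hK)))
  obtain ⟨w, hwW, hwv, hw⟩ := hdec (v + φ)
  refine ⟨φ, w, hφ, hwW, hwv, fun q hq ↦ ?_⟩
  calc (∑ i, ‖w i‖ ^ q) ^ (1 / q) ≤ ∑ i, ‖w i‖ :=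
        sum_rpow_rpow_one_div_le_sum_of_nonneg (fun i _ ↦ norm_nonneg (w i)) hq
    _ ≤ K * ‖v + φ‖ := hw
    _ ≤ K * (C₀ * p v + δ / K) := by gcongr
    _ = K * C₀ * p v + δ := by field_simp

end StableDecomposition

/-- seminorm stable decomposition (Lemma 4.6): under the global and local
quotient-norm bounds, every `w ∈ V` admits, up to kernel elements and arbitrary slack
`δ > 0`, a decomposition over the subspaces that is `q`-stable with respect to the
seminorm. -/
theorem stmt_5 {V : Type*} [NormedAddCommGroup V] [NormedSpace ℝ V] [CompleteSpace V]
    (N : ℕ) (Vj : Fin N → Submodule ℝ V) (hVjc : ∀ j, IsClosed ((Vj j : Set V)))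
    (hdecomp : ∀ v : V, ∃ wj : Fin N → V, (∀ j, wj j ∈ Vj j) ∧ (∑ j, wj j) = v)
    (p : Seminorm ℝ V) (hpc : Continuous (p : V → ℝ))
    (C₀ : ℝ) (hC₀ : 0 < C₀)
    (hglob : ∀ v : V, (⨅ φ : {x : V // p x = 0}, ‖v + (φ : V)‖) ≤ C₀ * p v)
    (Cj : Fin N → ℝ) (hCjpos : ∀ j, 0 < Cj j)
    (hloc : ∀ j : Fin N, ∀ vj ∈ Vj j,
      (⨅ φ : {x : V // x ∈ Vj j ∧ p x = 0}, ‖vj + (φ : V)‖) ≤ Cj j * p vj) :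
    ∀ q : ℝ, 1 ≤ q → ∃ C : ℝ, 0 < C ∧
      ∀ (w : V) (δ : ℝ), 0 < δ →
        ∃ (φ : V) (wj : Fin N → V), p φ = 0 ∧ (∀ j, wj j ∈ Vj j) ∧
          (∑ j, wj j) = w + φ ∧
          (∑ j, ‖wj j‖ ^ q) ^ (1 / q) ≤ C * p w + δ := by
  obtain ⟨C, hC, hdec⟩ := stmt_5_general hVjc hdecomp p hC₀ hglob
  exact fun q hq ↦ ⟨C, hC, fun w δ hδ ↦
    let ⟨φ, wj, hφ, hwj, hsum, hbound⟩ := hdec w δ hδ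
    ⟨φ, wj, hφ, hwj, hsum, hbound q hq⟩⟩
end

section
/- Let V be a real reflexive Banach space, let V₁, …, V_N be closed subspaces with V = V₁ + ⋯ + V_N, and let |·| be a continuous seminorm on V such that there exists C₀ > 0 with inf_{φ ∈ ker|·|} ‖v + φ‖ ≤ C₀|v| for all v ∈ V, and for each j there exists C_j > 0 with inf_{φ_j ∈ V_j ∩ ker|·|} ‖v_j + φ_j‖ ≤ C_j|v_j| for all v_j ∈ V_j. Let F : V → ℝ be convex and Gâteaux differentiable with Gâteaux derivative F', with F(v + φ) = F(v) for all v ∈ V and φ ∈ ker|·|. Let q > 1 and assume: for every j, every |·|-bounded convex subset K of V, and every r > 0, there exists L > 0 such that d_F(w_j; v) ≤ L‖w_j‖^q for all v ∈ K and all w_j ∈ V_j with ‖w_j‖ ≤ r. Then for every |·|-bounded convex subset K of V there exists a constant C_K > 0 such that for all v ∈ K and w ∈ V with v + w ∈ K, there exist φ ∈ ker|·| and w_j ∈ V_j (j = 1, …, N) with Σ_{j=1}^N w_j = w + φ and Σ_{j=1}^N d_F(w_j; v) ≤ (C_K/q)·|w|^q. -/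
/-!
By the open mapping theorem for `∏ V_j → V`, every `x` splits as `∑ w_j` with `‖w_j‖ ≤ A ‖x‖`.
Applied to a representative of `w` modulo `ker |·|` whose norm is at most `B |w|`, this gives
`‖w_j‖ ≤ A B |w|`. On a `|·|`-bounded set the `w_j` therefore stay in a fixed norm ball, where the
smoothness bound turns these estimates into the `q`-th power of `|w|`.
-/

section StableDecomposition

variable {𝕜 V ι S : Type*} [Fintype ι] [FunLike S V ℝ]

theorem exists_sum_eq_and_norm_le [NontriviallyNormedField 𝕜] [NormedAddCommGroup V]
    [NormedSpace 𝕜 V] [CompleteSpace V] (W : ι → Submodule 𝕜 V)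
    (hclosed : ∀ i, IsClosed (W i : Set V))
    (hsum : ∀ v : V, ∃ w : ι → V, (∀ i, w i ∈ W i) ∧ ∑ i, w i = v) :
    ∃ A : ℝ, 0 < A ∧ ∀ v : V, ∃ w : ι → V,
      (∀ i, w i ∈ W i) ∧ ∑ i, w i = v ∧ ∀ i, ‖w i‖ ≤ A * ‖v‖ := by
  have (i : ι) : CompleteSpace (W i) := (hclosed i).completeSpace_coe
  let T : (∀ i, W i) →L[𝕜] V := ∑ i, (W i).subtypeL ∘L ContinuousLinearMap.proj i
  have T_apply (w : ∀ i, W i) : T w = ∑ i, (w i : V) := by simp [T]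
  have T_surjective : Function.Surjective T := fun v => by
    obtain ⟨w, hw, rfl⟩ := hsum v
    exact ⟨fun i => ⟨w i, hw i⟩, T_apply _⟩
  obtain ⟨A, hA, hT⟩ := T.exists_preimage_norm_le T_surjective
  refine ⟨A, hA, fun v => ?_⟩
  obtain ⟨w, rfl, hw⟩ := hT v
  exact ⟨fun i => w i, fun i => (w i).2, (T_apply w).symm,
    fun i => (norm_le_pi_norm w i).trans hw⟩

theorem exists_map_eq_zero_and_norm_add_le [SeminormedAddCommGroup V]
    [AddGroupSeminormClass S V ℝ] (p : S) {C B : ℝ} (hCB : C < B) {v : V}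
    (hv : ⨅ φ : {x : V // p x = 0}, ‖v + φ‖ ≤ C * p v) :
    ∃ φ : V, p φ = 0 ∧ ‖v + φ‖ ≤ B * p v := by
  rcases (apply_nonneg p v).eq_or_lt' with hzero | hpos
  · exact ⟨-v, by rw [map_neg_eq_map, hzero], by simp [hzero]⟩
  · have : Nonempty {x : V // p x = 0} := ⟨0, map_zero p⟩
    obtain ⟨⟨φ, hφ⟩, hlt⟩ :=
      exists_lt_of_ciInf_lt (hv.trans_lt (mul_lt_mul_of_pos_right hCB hpos))
    exact ⟨φ, hφ, hlt.le⟩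

theorem exists_sum_eq_add_and_norm_le_map [NontriviallyNormedField 𝕜] [NormedAddCommGroup V]
    [NormedSpace 𝕜 V] [CompleteSpace V] [AddGroupSeminormClass S V ℝ]
    (W : ι → Submodule 𝕜 V) (hclosed : ∀ i, IsClosed (W i : Set V))
    (hsum : ∀ v : V, ∃ w : ι → V, (∀ i, w i ∈ W i) ∧ ∑ i, w i = v)
    (p : S) (C : ℝ) (hp : ∀ v : V, ⨅ φ : {x : V // p x = 0}, ‖v + φ‖ ≤ C * p v) :
    ∃ B : ℝ, 0 < B ∧ ∀ v : V, ∃ (φ : V) (w : ι → V), p φ = 0 ∧ (∀ i, w i ∈ W i) ∧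
      ∑ i, w i = v + φ ∧ ∀ i, ‖w i‖ ≤ B * p v := by
  obtain ⟨A, hA, hdecomp⟩ := exists_sum_eq_and_norm_le W hclosed hsum
  refine ⟨A * (|C| + 1), by positivity, fun v => ?_⟩
  obtain ⟨φ, hφ, hnorm⟩ :=
    exists_map_eq_zero_and_norm_add_le p ((le_abs_self C).trans_lt (lt_add_one _)) (hp v)
  obtain ⟨w, hw, hwsum, hwnorm⟩ := hdecomp (v + φ)
  refine ⟨φ, w, hφ, hw, hwsum, fun i => ?_⟩
  calc ‖w i‖ ≤ A * ‖v + φ‖ := hwnorm i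
    _ ≤ A * ((|C| + 1) * p v) := by gcongr
    _ = A * (|C| + 1) * p v := (mul_assoc _ _ _).symm

theorem sum_le_sum_mul_rpow_of_le_mul_rpow {a L x : ι → ℝ} {q t : ℝ} (hq : 0 ≤ q)
    (hL : ∀ i, 0 ≤ L i) (hx : ∀ i, 0 ≤ x i) (hxt : ∀ i, x i ≤ t)
    (ha : ∀ i, a i ≤ L i * x i ^ q) : ∑ i, a i ≤ (∑ i, L i) * t ^ q := by
  rw [Finset.sum_mul]
  exact Finset.sum_le_sum fun i _ => (ha i).trans <|
    mul_le_mul_of_nonneg_left (Real.rpow_le_rpow (hx i) (hxt i) hq) (hL i)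

/-- The function `d v w` takes the place of the Bregman distance `F (v + w) - F v - F' v w`. -/
theorem stmt_7_general [NontriviallyNormedField 𝕜] [NormedAddCommGroup V]
    [NormedSpace 𝕜 V] [CompleteSpace V] [AddGroupSeminormClass S V ℝ]
    (W : ι → Submodule 𝕜 V) (hclosed : ∀ i, IsClosed (W i : Set V))
    (hsum : ∀ v : V, ∃ w : ι → V, (∀ i, w i ∈ W i) ∧ ∑ i, w i = v)
    (p : S) (C : ℝ) (hp : ∀ v : V, ⨅ φ : {x : V // p x = 0}, ‖v + φ‖ ≤ C * p v)
    (d : V → V → ℝ) (q : ℝ) (hq : 0 < q) (K : Set V) (hK : ∃ M : ℝ, ∀ v ∈ K, p v ≤ M)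
    (hd : ∀ i, ∀ r : ℝ, 0 < r → ∃ L : ℝ, 0 < L ∧
      ∀ v ∈ K, ∀ w ∈ W i, ‖w‖ ≤ r → d v w ≤ L * ‖w‖ ^ q) :
    ∃ CK : ℝ, 0 < CK ∧ ∀ v w : V, v ∈ K → v + w ∈ K →
      ∃ (φ : V) (u : ι → V), p φ = 0 ∧ (∀ i, u i ∈ W i) ∧
        ∑ i, u i = w + φ ∧ ∑ i, d v (u i) ≤ CK / q * p w ^ q := by
  obtain ⟨M, hM⟩ := hK
  obtain ⟨B, hB, hdecomp⟩ := exists_sum_eq_add_and_norm_le_map W hclosed hsum p C hp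
  have hr : 0 < B * (2 * |M| + 1) := by positivity
  choose L hL hdL using fun i => hd i _ hr
  have hLsum : 0 ≤ ∑ i, L i := Finset.sum_nonneg fun i _ => (hL i).le
  refine ⟨q * ((∑ i, L i + 1) * B ^ q), by positivity, fun v w hv hvw => ?_⟩
  obtain ⟨φ, u, hφ, hu, husum, hunorm⟩ := hdecomp w
  refine ⟨φ, u, hφ, hu, husum, ?_⟩
  have hpw : p w ≤ 2 * |M| + 1 := by
    have htriangle : p w ≤ p (v + w) + p v := by simpa using map_sub_le_add p (v + w) v
    linarith [hM v hv, hM _ hvw, le_abs_self M]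
  have hur (i : ι) : ‖u i‖ ≤ B * (2 * |M| + 1) :=
    (hunorm i).trans (mul_le_mul_of_nonneg_left hpw hB.le)
  have hpw_nonneg : 0 ≤ p w := apply_nonneg p w
  calc ∑ i, d v (u i)
      ≤ (∑ i, L i) * (B * p w) ^ q :=
        sum_le_sum_mul_rpow_of_le_mul_rpow hq.le (fun i => (hL i).le)
          (fun i => norm_nonneg (u i)) hunorm fun i => hdL i v hv (u i) (hu i) (hur i)
    _ ≤ (∑ i, L i + 1) * (B * p w) ^ q := by gcongr; exact le_add_of_nonneg_right zero_le_one
    _ = q * ((∑ i, L i + 1) * B ^ q) / q * p w ^ q := by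
        rw [mul_div_cancel_left₀ _ hq.ne', Real.mul_rpow hB.le hpw_nonneg, mul_assoc]

end StableDecomposition

/-- stable decomposition lemma (Lemma 4.10): on every seminorm-bounded
convex set there is a constant `C_K` such that the sum of local Bregman distances of a
suitable decomposition is bounded by `(C_K / q)·|w|^q`. -/
theorem stmt_7 {V : Type*} [NormedAddCommGroup V] [NormedSpace ℝ V] [CompleteSpace V]
    (hrefl : Function.Surjective (NormedSpace.inclusionInDoubleDual ℝ V))
    (N : ℕ) (Vj : Fin N → Submodule ℝ V) (hVjc : ∀ j, IsClosed ((Vj j : Set V)))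
    (hdecomp : ∀ v : V, ∃ wj : Fin N → V, (∀ j, wj j ∈ Vj j) ∧ (∑ j, wj j) = v)
    (p : Seminorm ℝ V) (hpc : Continuous (p : V → ℝ))
    (C₀ : ℝ) (hC₀ : 0 < C₀)
    (hglob : ∀ v : V, (⨅ φ : {x : V // p x = 0}, ‖v + (φ : V)‖) ≤ C₀ * p v)
    (Cj : Fin N → ℝ) (hCjpos : ∀ j, 0 < Cj j)
    (hloc : ∀ j : Fin N, ∀ vj ∈ Vj j,
      (⨅ φ : {x : V // x ∈ Vj j ∧ p x = 0}, ‖vj + (φ : V)‖) ≤ Cj j * p vj)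
    (F : V → ℝ) (hconv : ConvexOn ℝ Set.univ F)
    (F' : V → V →L[ℝ] ℝ) (hF' : ∀ v : V, HasGateauxDerivAt F (F' v) v)
    (hinv : ∀ v φ : V, p φ = 0 → F (v + φ) = F v)
    (q : ℝ) (hq : 1 < q)
    (hsmooth : ∀ j : Fin N, ∀ K : Set V, Convex ℝ K → (∃ M : ℝ, ∀ v ∈ K, p v ≤ M) →
      ∀ r : ℝ, 0 < r → ∃ L : ℝ, 0 < L ∧
        ∀ v ∈ K, ∀ wj ∈ Vj j, ‖wj‖ ≤ r →
          F (v + wj) - F v - F' v wj ≤ L * ‖wj‖ ^ q) :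
    ∀ K : Set V, Convex ℝ K → (∃ M : ℝ, ∀ v ∈ K, p v ≤ M) →
      ∃ CK : ℝ, 0 < CK ∧ ∀ v w : V, v ∈ K → v + w ∈ K →
        ∃ (φ : V) (wj : Fin N → V), p φ = 0 ∧ (∀ j, wj j ∈ Vj j) ∧
          (∑ j, wj j) = w + φ ∧
          (∑ j, (F (v + wj j) - F v - F' v (wj j))) ≤ (CK / q) * (p w) ^ q := by
  intro K hK hKp
  exact stmt_7_general Vj hVjc hdecomp p C₀ hglob (fun v w => F (v + w) - F v - F' v w) q
    (zero_lt_one.trans hq) K hKp fun j => hsmooth j K hK hKp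
end

section
/- Let V be a real reflexive Banach space and let M be a closed subspace of V. Define J*M° := {ξ ∈ V : there exists f ∈ V* with f(m) = 0 for all m ∈ M, f(ξ) = ‖ξ‖², and ‖f‖ = ‖ξ‖}. Then: (1) for every v ∈ V there exists φ ∈ M with ‖v − φ‖ ≤ ‖v − w‖ for all w ∈ M, and for every such minimizer φ one has v − φ ∈ J*M°; in particular V = M + J*M°; (2) M ∩ J*M° = {0}. -/
/-!
A functional `f` in the polar `M°` satisfies `‖f x‖ ≤ ‖f‖ * dist x M`, and by Hahn–Banach on
`V ⧸ M` some `f` in `M°` of norm at most one attains the value `dist x M` at `x`. Hence `ξ` lies in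
`J*M°` exactly when `0` is a best approximation of `ξ` in `M`, that is, when `‖ξ‖ ≤ dist ξ M`. This
gives `v - φ ∈ J*M°` for every best approximation `φ` of `v`, and that `M` and `J*M°` meet only in
`0`. For the existence of `φ`, evaluation at `v` is bounded by `dist v M` on `M°`. Extended to all
of the dual with the same bound, it is by reflexivity evaluation at some `ξ` with `‖ξ‖ ≤ dist v M`.
All of `M°` vanishes at `v - ξ`, so `φ = v - ξ` lies in `M`.
-/

open StrongDual (polarSubmodule mem_polarSubmodule)

section Seminormed

variable {𝕜 V : Type*} [RCLike 𝕜] [SeminormedAddCommGroup V] [NormedSpace 𝕜 V]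

theorem exists_mem_polarSubmodule_apply_eq_infDist (M : Submodule 𝕜 V) (x : V) :
    ∃ g ∈ polarSubmodule 𝕜 M, ‖g‖ ≤ 1 ∧ g x = (Metric.infDist x (M : Set V) : 𝕜) := by
  obtain ⟨g, hg_norm, hgx⟩ := exists_dual_vector'' 𝕜 (M.mkQ x)
  refine ⟨g.comp M.mkQL, (mem_polarSubmodule 𝕜 M _).2 fun m hm ↦ ?_, ?_, ?_⟩
  · have hm_mk : M.mkQ m = 0 := (Submodule.Quotient.mk_eq_zero M).2 hm
    simp [hm_mk]
  · refine ContinuousLinearMap.opNorm_le_bound _ zero_le_one fun y ↦ ?_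
    exact g.le_of_opNorm_le_of_le hg_norm (Submodule.Quotient.norm_mk_le M y)
  · have hx_norm : ‖M.mkQ x‖ = Metric.infDist x (M : Set V) :=
      QuotientAddGroup.norm_mk (S := M.toAddSubgroup) x
    rw [← hx_norm]
    exact hgx

theorem exists_extension_opNorm_le {N : Submodule 𝕜 V} (G : Module.Dual 𝕜 N) {C : ℝ} (hC : 0 ≤ C)
    (hG : ∀ x : N, ‖G x‖ ≤ C * ‖x‖) :
    ∃ g : StrongDual 𝕜 V, (∀ x : N, g x = G x) ∧ ‖g‖ ≤ C := by
  obtain ⟨g, hg, hg_norm⟩ := exists_extension_norm_eq N (G.mkContinuous C hG)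
  exact ⟨g, hg, hg_norm.trans_le (G.mkContinuous_norm_le hC hG)⟩

theorem norm_apply_le_norm_mul_infDist_of_mem_polarSubmodule {M : Submodule 𝕜 V}
    {f : StrongDual 𝕜 V} (hf : f ∈ polarSubmodule 𝕜 M) (x : V) :
    ‖f x‖ ≤ ‖f‖ * Metric.infDist x (M : Set V) := by
  rw [Metric.infDist_eq_iInf, Real.mul_iInf_of_nonneg (norm_nonneg f)]
  refine le_ciInf fun m ↦ ?_
  have hfm : f (m : V) = 0 := (mem_polarSubmodule 𝕜 M f).1 hf m m.2
  simpa [hfm, dist_eq_norm] using f.le_opNorm (x - m)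

theorem mem_closure_of_forall_mem_polarSubmodule_apply_eq_zero {M : Submodule 𝕜 V} {x : V}
    (hx : ∀ f ∈ polarSubmodule 𝕜 M, f x = 0) : x ∈ closure (M : Set V) := by
  obtain ⟨g, hgM, -, hgx⟩ := exists_mem_polarSubmodule_apply_eq_infDist M x
  rw [hx g hgM] at hgx
  exact (Metric.mem_closure_iff_infDist_zero M.nonempty).2 (RCLike.ofReal_eq_zero.1 hgx.symm)

variable (𝕜) in
/-- The set `J*M°`: the image of the polar `M°` of a subspace `M` under the normalized duality
mapping `J*` of the dual, of which only the values in `V` (rather than its bidual) are kept. Over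
`ℂ`, the condition `f ξ = ‖ξ‖ ^ 2` also says that `f ξ` is real. -/
def polarDualityImage (M : Submodule 𝕜 V) : Set V :=
  {ξ | ∃ f ∈ polarSubmodule 𝕜 M, f ξ = (‖ξ‖ : 𝕜) ^ 2 ∧ ‖f‖ = ‖ξ‖}

theorem norm_le_infDist_of_mem_polarDualityImage {M : Submodule 𝕜 V} {ξ : V}
    (hξ : ξ ∈ polarDualityImage 𝕜 M) : ‖ξ‖ ≤ Metric.infDist ξ (M : Set V) := by
  obtain ⟨f, hfM, hfξ, hf_norm⟩ := hξ
  have h_sq : ‖ξ‖ * ‖ξ‖ ≤ ‖ξ‖ * Metric.infDist ξ (M : Set V) := calc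
    ‖ξ‖ * ‖ξ‖ = ‖f ξ‖ := by simp [hfξ, sq]
    _ ≤ ‖f‖ * Metric.infDist ξ (M : Set V) :=
      norm_apply_le_norm_mul_infDist_of_mem_polarSubmodule hfM ξ
    _ = ‖ξ‖ * Metric.infDist ξ (M : Set V) := by rw [hf_norm]
  rcases (norm_nonneg ξ).eq_or_lt with h_zero | h_pos
  · exact h_zero ▸ Metric.infDist_nonneg
  · exact le_of_mul_le_mul_left h_sq h_pos

theorem mem_polarDualityImage_of_norm_le_infDist {M : Submodule 𝕜 V} {ξ : V}
    (hξ : ‖ξ‖ ≤ Metric.infDist ξ (M : Set V)) : ξ ∈ polarDualityImage 𝕜 M := by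
  obtain ⟨g, hgM, hg_norm, hgξ⟩ := exists_mem_polarSubmodule_apply_eq_infDist M ξ
  have h_dist : Metric.infDist ξ (M : Set V) = ‖ξ‖ :=
    le_antisymm (by simpa using Metric.infDist_le_dist_of_mem (x := ξ) M.zero_mem) hξ
  rw [h_dist] at hgξ
  have h_norm_smul : ‖(‖ξ‖ : 𝕜) • g‖ = ‖ξ‖ := by
    rw [norm_smul, RCLike.norm_ofReal, abs_norm]
    refine le_antisymm (mul_le_of_le_one_right (norm_nonneg ξ) hg_norm) ?_
    simpa [hgξ, mul_comm] using g.le_opNorm ξ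
  exact ⟨(‖ξ‖ : 𝕜) • g, Submodule.smul_mem _ _ hgM, by simp [hgξ, sq], h_norm_smul⟩

theorem mem_polarDualityImage_iff_norm_le_infDist {M : Submodule 𝕜 V} {ξ : V} :
    ξ ∈ polarDualityImage 𝕜 M ↔ ‖ξ‖ ≤ Metric.infDist ξ (M : Set V) :=
  ⟨norm_le_infDist_of_mem_polarDualityImage, mem_polarDualityImage_of_norm_le_infDist⟩

theorem sub_mem_polarDualityImage {M : Submodule 𝕜 V} {v φ : V} (hφ : φ ∈ M)
    (hmin : ∀ w ∈ M, ‖v - φ‖ ≤ ‖v - w‖) : v - φ ∈ polarDualityImage 𝕜 M := by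
  refine mem_polarDualityImage_iff_norm_le_infDist.2 <|
    (Metric.le_infDist M.nonempty).2 fun {w} hw ↦ ?_
  rw [dist_eq_norm, sub_sub]
  exact hmin (φ + w) (M.add_mem hφ hw)

end Seminormed

section Normed

variable {𝕜 V : Type*} [RCLike 𝕜] [NormedAddCommGroup V] [NormedSpace 𝕜 V]

theorem eq_zero_of_mem_of_mem_polarDualityImage {M : Submodule 𝕜 V} {x : V} (hxM : x ∈ M)
    (hx : x ∈ polarDualityImage 𝕜 M) : x = 0 := by
  rw [mem_polarDualityImage_iff_norm_le_infDist, Metric.infDist_zero_of_mem hxM] at hx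
  exact norm_le_zero_iff.1 hx

theorem exists_forall_apply_eq_and_norm_le_of_surjective_inclusionInDoubleDual
    (hrefl : Function.Surjective (NormedSpace.inclusionInDoubleDual 𝕜 V))
    {N : Submodule 𝕜 (StrongDual 𝕜 V)} (G : Module.Dual 𝕜 N) {C : ℝ} (hC : 0 ≤ C)
    (hG : ∀ f : N, ‖G f‖ ≤ C * ‖f‖) :
    ∃ ξ : V, (∀ f : N, (f : StrongDual 𝕜 V) ξ = G f) ∧ ‖ξ‖ ≤ C := by
  obtain ⟨G', hG', hG'_norm⟩ := exists_extension_opNorm_le G hC hG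
  obtain ⟨ξ, rfl⟩ := hrefl G'
  refine ⟨ξ, hG', ?_⟩
  calc ‖ξ‖ = ‖NormedSpace.inclusionInDoubleDual 𝕜 V ξ‖ :=
        ((NormedSpace.inclusionInDoubleDualLi 𝕜 (E := V)).norm_map ξ).symm
    _ ≤ C := hG'_norm

theorem exists_mem_forall_norm_sub_le_of_surjective_inclusionInDoubleDual
    (hrefl : Function.Surjective (NormedSpace.inclusionInDoubleDual 𝕜 V))
    {M : Submodule 𝕜 V} (hMc : IsClosed (M : Set V)) (v : V) :
    ∃ φ ∈ M, ∀ w ∈ M, ‖v - φ‖ ≤ ‖v - w‖ := by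
  let evalOnPolar : Module.Dual 𝕜 (polarSubmodule 𝕜 M) :=
    (NormedSpace.inclusionInDoubleDual 𝕜 V v).toLinearMap.domRestrict _
  have h_eval_bound : ∀ f, ‖evalOnPolar f‖ ≤ Metric.infDist v (M : Set V) * ‖f‖ := fun f ↦ by
    rw [mul_comm]
    exact norm_apply_le_norm_mul_infDist_of_mem_polarSubmodule f.2 v
  obtain ⟨ξ, hξ, hξ_norm⟩ :=
    exists_forall_apply_eq_and_norm_le_of_surjective_inclusionInDoubleDual hrefl evalOnPolar
      Metric.infDist_nonneg h_eval_bound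
  have h_polar : ∀ f ∈ polarSubmodule 𝕜 M, f (v - ξ) = 0 := fun f hf ↦ by
    rw [map_sub, sub_eq_zero]
    exact (hξ ⟨f, hf⟩).symm
  refine ⟨v - ξ, ?_, fun w hw ↦ ?_⟩
  · exact hMc.closure_subset (mem_closure_of_forall_mem_polarSubmodule_apply_eq_zero h_polar)
  · calc ‖v - (v - ξ)‖ = ‖ξ‖ := by rw [sub_sub_cancel]
      _ ≤ Metric.infDist v (M : Set V) := hξ_norm
      _ ≤ ‖v - w‖ := dist_eq_norm v w ▸ Metric.infDist_le_dist_of_mem hw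

theorem stmt_11_general (hrefl : Function.Surjective (NormedSpace.inclusionInDoubleDual 𝕜 V))
    (M : Submodule 𝕜 V) (hMc : IsClosed (M : Set V)) :
    (∀ v : V, ∃ φ ∈ M, ∀ w ∈ M, ‖v - φ‖ ≤ ‖v - w‖) ∧
    (∀ v φ : V, φ ∈ M → (∀ w ∈ M, ‖v - φ‖ ≤ ‖v - w‖) → v - φ ∈ polarDualityImage 𝕜 M) ∧
    (∀ v : V, ∃ φ ∈ M, ∃ ξ ∈ polarDualityImage 𝕜 M, v = φ + ξ) ∧
    (∀ x ∈ M, x ∈ polarDualityImage 𝕜 M → x = 0) := by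
  have h_exists := exists_mem_forall_norm_sub_le_of_surjective_inclusionInDoubleDual hrefl hMc
  refine ⟨h_exists, fun v φ ↦ sub_mem_polarDualityImage, fun v ↦ ?_,
    fun x ↦ eq_zero_of_mem_of_mem_polarDualityImage⟩
  obtain ⟨φ, hφ, hmin⟩ := h_exists v
  exact ⟨φ, hφ, v - φ, sub_mem_polarDualityImage hφ hmin, (add_sub_cancel φ v).symm⟩

end Normed

/-- orthogonal-type decomposition `V = M + J*M°` of a reflexive Banach
space along a closed subspace `M` (Proposition 5.1). -/
theorem stmt_11 {V : Type*} [NormedAddCommGroup V] [NormedSpace ℝ V] [CompleteSpace V]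
    (hrefl : Function.Surjective (NormedSpace.inclusionInDoubleDual ℝ V))
    (M : Submodule ℝ V) (hMc : IsClosed (M : Set V)) :
    (∀ v : V, ∃ φ ∈ M, ∀ w ∈ M, ‖v - φ‖ ≤ ‖v - w‖)
    ∧
    (∀ v φ : V, φ ∈ M → (∀ w ∈ M, ‖v - φ‖ ≤ ‖v - w‖) →
      ∃ f : V →L[ℝ] ℝ, (∀ m ∈ M, f m = 0) ∧ f (v - φ) = ‖v - φ‖ ^ 2 ∧ ‖f‖ = ‖v - φ‖)
    ∧
    (∀ v : V, ∃ φ ∈ M, ∃ ξ : V,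
      (∃ f : V →L[ℝ] ℝ, (∀ m ∈ M, f m = 0) ∧ f ξ = ‖ξ‖ ^ 2 ∧ ‖f‖ = ‖ξ‖) ∧
      v = φ + ξ)
    ∧
    (∀ x : V, x ∈ M →
      (∃ f : V →L[ℝ] ℝ, (∀ m ∈ M, f m = 0) ∧ f x = ‖x‖ ^ 2 ∧ ‖f‖ = ‖x‖) →
      x = 0) := by
  simpa only [polarDualityImage, Set.mem_ofPred_eq, mem_polarSubmodule, RCLike.ofReal_real_eq_id,
    id_eq] using stmt_11_general hrefl M hMc
end

section
/- Let V be a real normed vector space, let M be a closed subspace of V, and define J*M° := {ξ ∈ V : there exists f ∈ V* with f(m) = 0 for all m ∈ M, f(ξ) = ‖ξ‖², and ‖f‖ = ‖ξ‖}. Then for every q ≥ 1, every φ ∈ M, and every ξ ∈ J*M°: ‖φ‖^q + ‖ξ‖^q ≤ (2^q + 1)·‖φ + ξ‖^q. -/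
section DualityMap

variable {𝕜 E : Type*} [RCLike 𝕜] [SeminormedAddCommGroup E] [NormedSpace 𝕜 E]

variable (𝕜) in
/-- The normalized duality map `J`, as a set-valued map from a space to its topological dual. A
point `ξ` belongs to `J*M°` when some `f ∈ dualityMap 𝕜 ξ` vanishes on `M`. -/
def dualityMap (x : E) : Set (StrongDual 𝕜 E) :=
  {f | f x = (‖x‖ : 𝕜) ^ 2 ∧ ‖f‖ = ‖x‖}

theorem norm_le_norm_add_of_mem_dualityMap {f : StrongDual 𝕜 E} {x y : E}
    (hf : f ∈ dualityMap 𝕜 x) (hy : f y = 0) : ‖x‖ ≤ ‖y + x‖ := by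
  obtain ⟨hfx, hf_norm⟩ := hf
  have mul_norm_le : ‖x‖ * ‖x‖ ≤ ‖x‖ * ‖y + x‖ :=
    calc ‖x‖ * ‖x‖ = ‖f (y + x)‖ := by simp [hy, hfx, sq]
      _ ≤ ‖f‖ * ‖y + x‖ := f.le_opNorm _
      _ = ‖x‖ * ‖y + x‖ := by rw [hf_norm]
  obtain hx | hx := (norm_nonneg x).eq_or_lt
  · exact hx ▸ norm_nonneg _
  · exact le_of_mul_le_mul_left mul_norm_le hx

end DualityMap

theorem norm_rpow_add_norm_rpow_le_of_norm_le_norm_add {E : Type*} [SeminormedAddGroup E]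
    {x y : E} {q : ℝ} (hq : 0 ≤ q) (hx : ‖x‖ ≤ ‖y + x‖) :
    ‖y‖ ^ q + ‖x‖ ^ q ≤ ((2 : ℝ) ^ q + 1) * ‖y + x‖ ^ q := by
  have hy : ‖y‖ ≤ 2 * ‖y + x‖ :=
    calc ‖y‖ ≤ ‖y + x‖ + ‖x‖ := norm_le_add_norm_add y x
      _ ≤ 2 * ‖y + x‖ := by linarith
  calc ‖y‖ ^ q + ‖x‖ ^ q ≤ (2 * ‖y + x‖) ^ q + ‖y + x‖ ^ q := by gcongr
    _ = ((2 : ℝ) ^ q + 1) * ‖y + x‖ ^ q := by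
      rw [Real.mul_rpow zero_le_two (norm_nonneg _), add_one_mul]

theorem stmt_12_general {𝕜 E : Type*} [RCLike 𝕜] [SeminormedAddCommGroup E] [NormedSpace 𝕜 E]
    {q : ℝ} (hq : 0 ≤ q) {φ ξ : E} {f : StrongDual 𝕜 E} (hξ : f ∈ dualityMap 𝕜 ξ) (hφ : f φ = 0) :
    ‖φ‖ ^ q + ‖ξ‖ ^ q ≤ ((2 : ℝ) ^ q + 1) * ‖φ + ξ‖ ^ q :=
  norm_rpow_add_norm_rpow_le_of_norm_le_norm_add hq (norm_le_norm_add_of_mem_dualityMap hξ hφ)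

/-- for `φ ∈ M` and `ξ ∈ J*M°` one has
`‖φ‖^q + ‖ξ‖^q ≤ (2^q + 1)·‖φ + ξ‖^q` (Corollary 5.2(a)). -/
theorem stmt_12 {V : Type*} [NormedAddCommGroup V] [NormedSpace ℝ V]
    (M : Submodule ℝ V) (hMc : IsClosed (M : Set V))
    (q : ℝ) (hq : 1 ≤ q)
    (φ : V) (hφ : φ ∈ M) (ξ : V)
    (hξ : ∃ f : V →L[ℝ] ℝ, (∀ m ∈ M, f m = 0) ∧ f ξ = ‖ξ‖ ^ 2 ∧ ‖f‖ = ‖ξ‖) :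
    ‖φ‖ ^ q + ‖ξ‖ ^ q ≤ ((2 : ℝ) ^ q + 1) * ‖φ + ξ‖ ^ q := by
  obtain ⟨f, hfM, hfξ⟩ := hξ
  exact stmt_12_general (zero_le_one.trans hq) hfξ (hfM φ hφ)
end

section
/- Let V be a real reflexive Banach space, V_j a closed subspace of V, and F : V → ℝ convex and Gâteaux differentiable with Gâteaux derivative F'. Fix v ∈ V. Let F_j(·; v) : V_j → ℝ be convex and Gâteaux differentiable with Gâteaux derivative F_j'(·; v) (a map from V_j to continuous linear functionals on V_j), satisfying the consistency conditions F_j(0; v) = F(v) and ⟨F_j'(0; v), x⟩ = ⟨F'(v), x⟩ for all x ∈ V_j. Define d_j(w_j; v) := F_j(w_j; v) − F(v) − ⟨F'(v), w_j⟩ and ⟨d_j'(w_j; v), x⟩ := ⟨F_j'(w_j; v), x⟩ − ⟨F'(v), x⟩ for w_j, x ∈ V_j. Suppose there exist constants ρ ≥ 1 and ω ∈ (0, ρ] such that d_F(w_j; v) ≤ ω·d_j(w_j; v) for all w_j ∈ V_j, and ⟨d_j'(w_j; v), w_j⟩ ≥ ρ·d_j(w_j; v) for all w_j ∈ V_j.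 If ŵ_j ∈ V_j minimizes F_j(·; v) over V_j, then F(v) − F(v + ŵ_j) ≥ (1 − ω/ρ)·⟨d_j'(ŵ_j; v), ŵ_j⟩ ≥ 0. -/
/-!
Write `D = F_j(ŵ) - F(v) - ⟨F'(v), ŵ⟩` for the value of `d_j` at the minimizer. The subgradient
inequality for `F` at `v` makes its Bregman distance nonnegative, so the stability bound forces
`0 ≤ D`; since `F_j(ŵ) ≤ F_j(0) = F(v)`, this gives `⟨F'(v), ŵ⟩ ≤ 0`. Criticality of `ŵ` turns
`⟨d_j'(ŵ), ŵ⟩` into `-⟨F'(v), ŵ⟩`, so that `ω D ≤ -(ω / ρ) ⟨F'(v), ŵ⟩`, and the decrease of `F`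
follows from the stability bound once more.
-/

theorem le_sub_of_convexOn_of_hasLineDerivAt {E : Type*} [AddCommGroup E] [Module ℝ E] {s : Set E}
    {F : E → ℝ} {F' : ℝ} {x w : E} (hF : ConvexOn ℝ s F) (hx : x ∈ s) (hxw : x + w ∈ s)
    (hF' : HasLineDerivAt ℝ F F' x w) : F' ≤ F (x + w) - F x := by
  have hline : ConvexOn ℝ (AffineMap.lineMap x (x + w) ⁻¹' s)
      (fun t : ℝ => F (x + t • w)) := by
    simpa [Function.comp_def, AffineMap.lineMap_apply, add_comm] using
      hF.comp_affineMap (AffineMap.lineMap x (x + w) : ℝ →ᵃ[ℝ] E)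
  simpa [slope_def_field] using
    hline.le_slope_of_hasDerivAt (x := 0) (y := 1) (by simpa) (by simpa) one_pos hF'

namespace HasGateauxDerivAt

variable {V : Type*} [NormedAddCommGroup V] [NormedSpace ℝ V]
  {F : V → ℝ} {f : V →L[ℝ] ℝ} {v : V}

theorem hasLineDerivAt (hF : HasGateauxDerivAt F f v) (w : V) :
    HasLineDerivAt ℝ F (f w) v w := by
  rw [hasLineDerivAt_iff_tendsto_slope_zero]
  simpa only [div_eq_inv_mul, smul_eq_mul] using hF w

theorem eq_zero_of_isLocalExtr (hF : HasGateauxDerivAt F f v) (hv : IsLocalExtr F v) : f = 0 :=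
  ContinuousLinearMap.ext fun w => hv.hasLineDerivAt_eq_zero (hF.hasLineDerivAt w)

theorem le_sub_of_convexOn {s : Set V} {w : V} (hF : HasGateauxDerivAt F f v)
    (hconv : ConvexOn ℝ s F) (hv : v ∈ s) (hvw : v + w ∈ s) : f w ≤ F (v + w) - F v :=
  le_sub_of_convexOn_of_hasLineDerivAt hconv hv hvw (hF.hasLineDerivAt w)

end HasGateauxDerivAt

theorem stmt_16_general {V W : Type*} [NormedAddCommGroup V] [NormedSpace ℝ V]
    [NormedAddCommGroup W] [NormedSpace ℝ W] (P : W →ₗ[ℝ] V)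
    {F : V → ℝ} (hconv : ConvexOn ℝ Set.univ F)
    {f : V →L[ℝ] ℝ} {v : V} (hF : HasGateauxDerivAt F f v)
    {Fj : W → ℝ} {fj : W →L[ℝ] ℝ} {w : W} (hFj : HasGateauxDerivAt Fj fj w)
    (hFj0 : Fj 0 = F v) {ρ ω : ℝ} (hω0 : 0 < ω) (hωρ : ω ≤ ρ)
    (hstab : F (v + P w) - F v - f (P w) ≤ ω * (Fj w - F v - f (P w)))
    (hrho : ρ * (Fj w - F v - f (P w)) ≤ fj w - f (P w))
    (hmin : ∀ x, Fj w ≤ Fj x) :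
    (1 - ω / ρ) * (fj w - f (P w)) ≤ F v - F (v + P w) ∧
      0 ≤ (1 - ω / ρ) * (fj w - f (P w)) := by
  have hρ : 0 < ρ := hω0.trans_le hωρ
  have hcrit : fj w = 0 := by
    rw [hFj.eq_zero_of_isLocalExtr (.inl (.of_forall hmin)), zero_apply]
  have hsubgradient : f (P w) ≤ F (v + P w) - F v :=
    hF.le_sub_of_convexOn hconv (Set.mem_univ v) (Set.mem_univ _)
  have hbregman : 0 ≤ Fj w - F v - f (P w) :=
    nonneg_of_mul_nonneg_right ((sub_nonneg.2 hsubgradient).trans hstab) hω0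
  have hdescent : f (P w) ≤ 0 := by linarith [hmin 0]
  have hmodel : ω * (Fj w - F v - f (P w)) ≤ ω / ρ * (fj w - f (P w)) := by
    calc ω * (Fj w - F v - f (P w)) = ω / ρ * (ρ * (Fj w - F v - f (P w))) := by field_simp
      _ ≤ ω / ρ * (fj w - f (P w)) := by gcongr
  have hratio : ω / ρ ≤ 1 := (div_le_one hρ).2 hωρ
  rw [hcrit] at hmodel ⊢
  exact ⟨by linarith, mul_nonneg (by linarith) (by linarith)⟩

/-- sufficient decrease produced by an inexact local problem
(Lemma A.2). -/
theorem stmt_16 {V : Type*} [NormedAddCommGroup V] [NormedSpace ℝ V] [CompleteSpace V]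
    (hrefl : Function.Surjective (NormedSpace.inclusionInDoubleDual ℝ V))
    (Vj : Submodule ℝ V) (hVjc : IsClosed (Vj : Set V))
    (F : V → ℝ) (hconv : ConvexOn ℝ Set.univ F)
    (F' : V → V →L[ℝ] ℝ) (hF' : ∀ v : V, HasGateauxDerivAt F (F' v) v)
    (v : V)
    (Fj : Vj → ℝ) (hFjconv : ConvexOn ℝ Set.univ Fj)
    (Fj' : Vj → (Vj →L[ℝ] ℝ)) (hFj' : ∀ x : Vj, HasGateauxDerivAt Fj (Fj' x) x)
    (hcons0 : Fj 0 = F v)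
    (hcons1 : ∀ x : Vj, Fj' 0 x = F' v (x : V))
    (ρ ω : ℝ) (hρ : 1 ≤ ρ) (hω0 : 0 < ω) (hωρ : ω ≤ ρ)
    (hstab : ∀ wj : Vj,
      F (v + (wj : V)) - F v - F' v (wj : V) ≤ ω * (Fj wj - F v - F' v (wj : V)))
    (hrho : ∀ wj : Vj,
      ρ * (Fj wj - F v - F' v (wj : V)) ≤ Fj' wj wj - F' v (wj : V))
    (wh : Vj) (hwh : ∀ x : Vj, Fj wh ≤ Fj x) :
    (1 - ω / ρ) * (Fj' wh wh - F' v (wh : V)) ≤ F v - F (v + (wh : V))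
    ∧ 0 ≤ (1 - ω / ρ) * (Fj' wh wh - F' v (wh : V)) :=
  stmt_16_general Vj.subtype hconv (hF' v) (hFj' wh) hcons0 hω0 hωρ (hstab wh) (hrho wh) hwh
end

section
/- Let (a_n)_{n ≥ 0} be a sequence of positive real numbers, and let C > 0 and γ > 1 be constants such that a_n − a_{n+1} ≥ C·a_n^γ for all n ≥ 0. Set β = 1/(γ − 1). Then for all n ≥ 0: a_n ≤ (β/(C·n + β·a_0^{−1/β}))^β. -/
/-!
The recursion is a discrete form of `a' ≤ -C * a ^ γ`, which integrates to a lower bound growing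
linearly for `a ^ (1 - γ)`. In the discrete setting the chain rule is replaced by convexity: the
graph of `t ↦ t ^ (1 - γ)` lies above its tangent at `a n`, so `a ^ (1 - γ)` increases by at least
`(γ - 1) * C` at each step. Summing these increments and inverting the decreasing power gives the
bound.
-/

theorem one_add_mul_self_le_rpow_one_add_of_nonpos {s p : ℝ} (hs : -1 < s) (hp : p ≤ 0) :
    1 + p * s ≤ (1 + s) ^ p := by
  have h_pos : 0 < 1 + s := by linarith
  have h_log : Real.log (1 + s) ≤ s := by linarith [Real.log_le_sub_one_of_pos h_pos]
  calc
    1 + p * s ≤ Real.log (1 + s) * p + 1 := by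
      linarith [mul_le_mul_of_nonpos_right h_log hp]
    _ ≤ Real.exp (Real.log (1 + s) * p) := Real.add_one_le_exp _
    _ = (1 + s) ^ p := (Real.rpow_def_of_pos h_pos p).symm

theorem rpow_add_mul_sub_le_rpow_of_nonpos {x y p : ℝ} (hx : 0 < x) (hy : 0 < y) (hp : p ≤ 0) :
    x ^ p + p * x ^ (p - 1) * (y - x) ≤ y ^ p := by
  have h_ratio : 1 + (y / x - 1) = y / x := by ring
  have h_bernoulli : 1 + p * (y / x - 1) ≤ (y / x) ^ p := by
    have h := one_add_mul_self_le_rpow_one_add_of_nonpos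
      (show -1 < y / x - 1 by linarith [div_pos hy hx]) hp
    rwa [h_ratio] at h
  calc
    x ^ p + p * x ^ (p - 1) * (y - x) = x ^ p * (1 + p * (y / x - 1)) := by
      rw [Real.rpow_sub_one hx.ne']
      field_simp
    _ ≤ x ^ p * (y / x) ^ p := by gcongr
    _ = y ^ p := by
      rw [← Real.mul_rpow hx.le (div_pos hy hx).le, mul_div_cancel₀ y hx.ne']

theorem rpow_one_sub_add_le_of_mul_rpow_le_sub {x y c γ : ℝ} (hx : 0 < x) (hy : 0 < y)
    (hγ : 1 ≤ γ) (h : c * x ^ γ ≤ x - y) :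
    x ^ (1 - γ) + (γ - 1) * c ≤ y ^ (1 - γ) := by
  have h_cancel : x ^ (1 - γ - 1) * x ^ γ = 1 := by
    rw [← Real.rpow_add hx, show 1 - γ - 1 + γ = 0 by ring, Real.rpow_zero]
  have h_slope : 0 ≤ (γ - 1) * x ^ (1 - γ - 1) :=
    mul_nonneg (sub_nonneg.mpr hγ) (Real.rpow_pos_of_pos hx _).le
  calc
    x ^ (1 - γ) + (γ - 1) * c
        = x ^ (1 - γ) + (γ - 1) * x ^ (1 - γ - 1) * (c * x ^ γ) := by
      linear_combination -(γ - 1) * c * h_cancel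
    _ ≤ x ^ (1 - γ) + (γ - 1) * x ^ (1 - γ - 1) * (x - y) := by
      linarith [mul_le_mul_of_nonneg_left h h_slope]
    _ = x ^ (1 - γ) + (1 - γ) * x ^ (1 - γ - 1) * (y - x) := by ring
    _ ≤ y ^ (1 - γ) := rpow_add_mul_sub_le_rpow_of_nonpos hx hy (sub_nonpos.mpr hγ)

section Sequence

variable {a c : ℕ → ℝ} {γ : ℝ}

theorem rpow_one_sub_add_sum_le_of_mul_rpow_le_sub (ha : ∀ n, 0 < a n) (hγ : 1 ≤ γ)
    (hrec : ∀ n, c n * a n ^ γ ≤ a n - a (n + 1)) (n : ℕ) :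
    a 0 ^ (1 - γ) + (γ - 1) * ∑ i ∈ Finset.range n, c i ≤ a n ^ (1 - γ) := by
  have h_sum : ∑ i ∈ Finset.range n, (γ - 1) * c i ≤
      ∑ i ∈ Finset.range n, (a (i + 1) ^ (1 - γ) - a i ^ (1 - γ)) :=
    Finset.sum_le_sum fun i _ ↦ le_sub_iff_add_le'.mpr
      (rpow_one_sub_add_le_of_mul_rpow_le_sub (ha i) (ha (i + 1)) hγ (hrec i))
  rw [← Finset.mul_sum, Finset.sum_range_sub (fun i ↦ a i ^ (1 - γ))] at h_sum
  exact le_sub_iff_add_le'.mp h_sum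

theorem le_rpow_inv_one_sub_of_mul_rpow_le_sub (ha : ∀ n, 0 < a n) (hc : ∀ n, 0 ≤ c n)
    (hγ : 1 < γ) (hrec : ∀ n, c n * a n ^ γ ≤ a n - a (n + 1)) (n : ℕ) :
    a n ≤ (a 0 ^ (1 - γ) + (γ - 1) * ∑ i ∈ Finset.range n, c i) ^ (1 - γ)⁻¹ := by
  have h_base : 0 < a 0 ^ (1 - γ) + (γ - 1) * ∑ i ∈ Finset.range n, c i :=
    add_pos_of_pos_of_nonneg (Real.rpow_pos_of_pos (ha 0) _)
      (mul_nonneg (sub_nonneg.mpr hγ.le) (Finset.sum_nonneg fun i _ ↦ hc i))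
  exact (Real.le_rpow_inv_iff_of_neg (ha n) h_base (sub_neg.mpr hγ)).mpr
    (rpow_one_sub_add_sum_le_of_mul_rpow_le_sub ha hγ.le hrec n)

end Sequence

/-- decay of a positive sequence satisfying
`a_n − a_{n+1} ≥ C·a_n^γ` (Lemma B.2). -/
theorem stmt_19 (a : ℕ → ℝ) (ha : ∀ n, 0 < a n)
    (C γ : ℝ) (hC : 0 < C) (hγ : 1 < γ)
    (hrec : ∀ n : ℕ, C * (a n) ^ γ ≤ a n - a (n + 1))
    (β : ℝ) (hβ : β = 1 / (γ - 1)) :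
    ∀ n : ℕ, a n ≤ (β / (C * (n : ℝ) + β * (a 0) ^ (-(1 / β)))) ^ β := by
  intro n
  have hβ_ne : β ≠ 0 := hβ ▸ one_div_ne_zero (sub_pos.mpr hγ).ne'
  have hγβ : γ - 1 = 1 / β := by rw [hβ, one_div_one_div]
  have h_exp : 1 - γ = -(1 / β) := by rw [← hγβ, neg_sub]
  have h_inv_exp : (1 - γ)⁻¹ = -β := by rw [h_exp, inv_neg, one_div, inv_inv]
  have h_base : (a 0 ^ (-(1 / β)) + 1 / β * (n * C))⁻¹ =
      β / (C * n + β * a 0 ^ (-(1 / β))) := by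
    field_simp
    ring
  have h_decay := le_rpow_inv_one_sub_of_mul_rpow_le_sub ha (fun _ ↦ hC.le) hγ hrec n
  rwa [Finset.sum_const, Finset.card_range, nsmul_eq_mul, h_inv_exp, h_exp, hγβ,
    Real.rpow_neg_eq_inv_rpow, h_base] at h_decay
end
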